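/- arXiv:2507.22282 — 2 statements merged into one kernel-verified Lean document; each statement's English description precedes it below -/
import Mathlib

section
/- Let R_1, …, R_{n+1} be independent and identically distributed real-valued random variables on a probability space (Ω, P). For every k ∈ {1, …, n+1}, the probability that R_{n+1} is less than or equal to the k-th smallest value among the full sample R_1, …, R_{n+1} is at least k/(n+1). -/
open MeasureTheory ProbabilityTheory

/-- The `k`-th smallest value (k-th order statistic, 1-indexed) of a finite tuple of reals:
the `k`-th entry of the tuple sorted in non-decreasing order. -/
noncomputable def kthSmallest {m : ℕ} (r : Fin m → ℝ) (k : ℕ) : ℝ :=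
  ((List.ofFn r).mergeSort (· ≤ ·)).getD (k - 1) 0

/-!
At every sample point at least `k` of the `m` values are at most the `k`-th smallest one, so the
events `{R j ≤ kthSmallest R k}` have total mass at least `k`. The order statistic is a symmetric
function of the sample, so exchangeability gives these `m` events the same probability, which is
therefore at least `k / m`.
-/

open scoped Finset ENNReal

section OrderStatistics

variable {m k : ℕ}

theorem mergeSort_ofFn {α : Type*} [LinearOrder α] (r : Fin m → α) :
    (List.ofFn r).mergeSort (· ≤ ·) = List.ofFn (r ∘ Tuple.sort r) := by
  have sorted_right : (List.ofFn (r ∘ Tuple.sort r)).Pairwise (· ≤ ·) :=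
    List.pairwise_ofFn.2 fun _ _ hij => Tuple.monotone_sort r hij.le
  have perm : ((List.ofFn r).mergeSort (· ≤ ·)).Perm (List.ofFn (r ∘ Tuple.sort r)) :=
    (List.mergeSort_perm _ _).trans ((Tuple.sort r).ofFn_comp_perm r).symm
  exact perm.eq_of_pairwise' (List.pairwise_mergeSort' (· ≤ ·) _) sorted_right

theorem kthSmallest_add_one (r : Fin m → ℝ) (i : Fin m) :
    kthSmallest r (i + 1) = r (Tuple.sort r i) := by
  simp [kthSmallest, mergeSort_ofFn]

theorem kthSmallest_comp_perm (r : Fin m → ℝ) (σ : Equiv.Perm (Fin m)) (k : ℕ) :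
    kthSmallest (r ∘ σ) k = kthSmallest r k := by
  simp only [kthSmallest, mergeSort_ofFn, Tuple.comp_perm_comp_sort_eq_comp_sort]

theorem kthSmallest_le_iff (hk : 1 ≤ k) (hkm : k ≤ m) {r : Fin m → ℝ} {a : ℝ} :
    kthSmallest r k ≤ a ↔ k ≤ #{j | r j ≤ a} := by
  obtain ⟨i, rfl⟩ : ∃ i : Fin m, (i : ℕ) + 1 = k := ⟨⟨k - 1, by lia⟩, by simp only; lia⟩
  have card_sort : #{j | (r ∘ Tuple.sort r) j ≤ a} = #{j | r j ≤ a} :=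
    Finset.card_equiv (Tuple.sort r) (by simp)
  rw [kthSmallest_add_one, Nat.add_one_le_iff, ← card_sort]
  exact (Tuple.lt_card_le_iff_apply_le_of_monotone (Tuple.monotone_sort r)).symm

theorem measurable_kthSmallest (hk : 1 ≤ k) (hkm : k ≤ m) :
    Measurable fun r : Fin m → ℝ => kthSmallest r k := by
  refine measurable_of_Iic fun a => ?_
  simp only [Set.preimage, Set.mem_Iic, kthSmallest_le_iff hk hkm, Finset.card_filter]
  refine measurableSet_le measurable_const (Finset.measurable_sum _ fun j _ => ?_)
  exact Measurable.ite (measurableSet_le (measurable_pi_apply j) measurable_const)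
    measurable_const measurable_const

end OrderStatistics

section Exchangeability

variable {ι Ω E : Type*} [MeasurableSpace Ω] [MeasurableSpace E] {P : Measure Ω}
  {X : ι → Ω → E}

/-- A family of random variables is exchangeable if permuting its indices does not change its
joint law. For infinite `ι` all permutations are allowed, not only the finitely supported ones. -/
def Exchangeable (X : ι → Ω → E) (P : Measure Ω) : Prop :=
  ∀ σ : Equiv.Perm ι, IdentDistrib (fun ω i => X (σ i) ω) (fun ω i => X i ω) P P

theorem exchangeable_of_iIndepFun_of_identDistrib [Countable ι] (hindep : iIndepFun X P)
    (hident : ∀ i j, IdentDistrib (X i) (X j) P P) : Exchangeable X P :=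
  fun σ => .pi (fun i => hident (σ i) i) (hindep.precomp σ.injective) hindep

theorem Exchangeable.identDistrib_prodMk_of_symmetric {F : Type*} [MeasurableSpace F]
    (hX : Exchangeable X P) {T : (ι → E) → F} (hT : Measurable T)
    (hsymm : ∀ x (σ : Equiv.Perm ι), T (x ∘ σ) = T x) (i j : ι) :
    IdentDistrib (fun ω => (X i ω, T (X · ω))) (fun ω => (X j ω, T (X · ω))) P P := by
  classical
  have hswap := (hX (Equiv.swap i j)).comp ((measurable_pi_apply j).prodMk hT)
  have hTswap (ω : Ω) : T (fun l => X (Equiv.swap i j l) ω) = T (X · ω) := hsymm (X · ω) _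
  simpa only [Function.comp_def, Equiv.swap_apply_right, hTswap] using hswap

theorem Exchangeable.measure_le_kthSmallest_eq {m k : ℕ} {R : Fin m → Ω → ℝ}
    (hR : Exchangeable R P) (hk : 1 ≤ k) (hkm : k ≤ m) (i j : Fin m) :
    P {ω | R i ω ≤ kthSmallest (R · ω) k} = P {ω | R j ω ≤ kthSmallest (R · ω) k} :=
  (hR.identDistrib_prodMk_of_symmetric (measurable_kthSmallest hk hkm)
    (fun r σ => kthSmallest_comp_perm r σ k) i j).measure_mem_eq
    (measurableSet_le measurable_fst measurable_snd)

end Exchangeability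

theorem mul_measure_univ_le_sum_measure {ι Ω : Type*} [Fintype ι] [MeasurableSpace Ω]
    (P : Measure Ω) {A : ι → Set Ω} [∀ ω, DecidablePred (ω ∈ A ·)] {k : ℕ}
    (hk : ∀ ω, k ≤ #{j | ω ∈ A j}) : k * P Set.univ ≤ ∑ j, P (A j) := by
  let B (j : ι) : Set Ω := toMeasurable P (A j)
  have hB (j : ι) : MeasurableSet (B j) := measurableSet_toMeasurable P (A j)
  have count_le (ω : Ω) : (k : ℝ≥0∞) ≤ ∑ j, (B j).indicator 1 ω :=
    calc (k : ℝ≥0∞) ≤ #{j | ω ∈ A j} := mod_cast hk ω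
      _ = ∑ j, (A j).indicator 1 ω := by
        simp only [Finset.natCast_card_filter, Set.indicator_apply, Pi.one_apply]
      _ ≤ ∑ j, (B j).indicator 1 ω := Finset.sum_le_sum fun j _ =>
        Set.indicator_le_indicator_of_subset (subset_toMeasurable P (A j)) (by simp) ω
  calc k * P Set.univ = ∫⁻ _, k ∂P := (lintegral_const _).symm
    _ ≤ ∫⁻ ω, ∑ j, (B j).indicator 1 ω ∂P := lintegral_mono count_le
    _ = ∑ j, ∫⁻ ω, (B j).indicator 1 ω ∂P :=
      lintegral_finsetSum _ fun j _ => measurable_one.indicator (hB j)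
    _ = ∑ j, P (A j) := by simp only [lintegral_indicator_one (hB _), B, measure_toMeasurable]

theorem rank_lemma_general {Ω : Type*} [MeasurableSpace Ω] {P : Measure Ω} {m k : ℕ}
    {R : Fin m → Ω → ℝ} (hR : Exchangeable R P) (j : Fin m) (hk : 1 ≤ k) (hkm : k ≤ m) :
    ENNReal.ofReal (k / m) * P Set.univ ≤ P {ω | R j ω ≤ kthSmallest (R · ω) k} := by
  have hm : 0 < (m : ℝ) := mod_cast j.pos
  have total_mass : k * P Set.univ ≤ m * P {ω | R j ω ≤ kthSmallest (R · ω) k} :=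
    calc k * P Set.univ ≤ ∑ i, P {ω | R i ω ≤ kthSmallest (R · ω) k} :=
          mul_measure_univ_le_sum_measure P fun _ => (kthSmallest_le_iff hk hkm).1 le_rfl
      _ = m * P {ω | R j ω ≤ kthSmallest (R · ω) k} := by
        simp [hR.measure_le_kthSmallest_eq hk hkm _ j]
  rw [ENNReal.ofReal_div_of_pos hm, ENNReal.ofReal_natCast, ENNReal.ofReal_natCast,
    ← ENNReal.mul_div_right_comm]
  exact ENNReal.div_le_of_le_mul' total_mass

/-- Rank lemma underlying conformal prediction: for i.i.d. real random variables
`R 0, …, R n` (a sample of size `n+1`), for every `k ∈ {1, …, n+1}` the probability that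
the last one, `R (Fin.last n)`, is at most the `k`-th smallest value of the full sample is
at least `k / (n+1)`. -/
theorem rank_lemma {Ω : Type*} [MeasurableSpace Ω] (P : Measure Ω) [IsProbabilityMeasure P]
    (n : ℕ) (R : Fin (n + 1) → Ω → ℝ)
    (hmeas : ∀ i, Measurable (R i))
    (hindep : iIndepFun R P)
    (hident : ∀ i j, IdentDistrib (R i) (R j) P P)
    (k : ℕ) (hk1 : 1 ≤ k) (hk2 : k ≤ n + 1) :
    P {ω | R (Fin.last n) ω ≤ kthSmallest (fun i => R i ω) k} ≥
      ENNReal.ofReal ((k : ℝ) / ((n : ℝ) + 1)) := by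
  have hexch : Exchangeable R P := exchangeable_of_iIndepFun_of_identDistrib hindep hident
  simpa using rank_lemma_general hexch (Fin.last n) hk1 hk2
end

section
/- Let r_1, …, r_n, r_{n+1} be real numbers and let k ∈ {1, …, n}. Then r_{n+1} is less than or equal to the k-th smallest value among r_1, …, r_n if and only if r_{n+1} is less than or equal to the k-th smallest value among the full collection r_1, …, r_n, r_{n+1}. -/
/-!
The `k`-th smallest value is at least `x` exactly when fewer than `k` entries lie strictly below
`x`. Inserting or removing an entry that is itself at least `x` does not change that number.
-/

section Sorting

variable {m : ℕ} {α : Type*} [LinearOrder α]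

theorem mergeSort_ofFn_eq_ofFn_comp_sort (r : Fin m → α) :
    (List.ofFn r).mergeSort (· ≤ ·) = List.ofFn (r ∘ Tuple.sort r) :=
  ((List.mergeSort_perm _ _).trans ((Tuple.sort r).ofFn_comp_perm r).symm).eq_of_pairwise'
    List.sortedLE_mergeSort.pairwise (Tuple.monotone_sort r).sortedLE_ofFn.pairwise

theorem le_apply_sort_iff_card_le (r : Fin m → α) (j : Fin m) (x : α) :
    x ≤ r (Tuple.sort r j) ↔ Finset.card {i | r i < x} ≤ j := by
  have card_sort : Finset.card {i | (r ∘ Tuple.sort r) i < x} = Finset.card {i | r i < x} :=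
    Finset.card_equiv (Tuple.sort r) (by simp)
  rw [← card_sort, ← not_lt, ← not_lt,
    Tuple.lt_card_lt_iff_apply_lt_of_monotone (Tuple.monotone_sort r), Function.comp_apply]

theorem card_filter_succAbove_lt_of_le {r : Fin (m + 1) → α} {p : Fin (m + 1)} {x : α}
    (hx : x ≤ r p) :
    Finset.card {i | r (p.succAbove i) < x} = Finset.card {i | r i < x} := by
  simp only [Finset.card_filter, Fin.sum_univ_succAbove _ p, if_neg hx.not_gt, zero_add]

end Sorting

theorem kthSmallest_val_add_one {m : ℕ} (r : Fin m → ℝ) (j : Fin m) :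
    kthSmallest r (j + 1) = r (Tuple.sort r j) := by
  simp [kthSmallest, mergeSort_ofFn_eq_ofFn_comp_sort]

theorem le_kthSmallest_iff_card_lt {m : ℕ} (r : Fin m → ℝ) {k : ℕ} (hk1 : 1 ≤ k) (hk2 : k ≤ m)
    (x : ℝ) : x ≤ kthSmallest r k ↔ Finset.card {i | r i < x} < k := by
  obtain ⟨j, rfl⟩ := Nat.exists_eq_add_of_le' hk1
  rw [kthSmallest_val_add_one r ⟨j, hk2⟩, le_apply_sort_iff_card_le, Nat.lt_succ_iff]

theorem kthSmallest_insert_iff_general {n : ℕ} (r : Fin (n + 1) → ℝ) (p : Fin (n + 1)) {x : ℝ}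
    (hx : x ≤ r p) {k : ℕ} (hk1 : 1 ≤ k) (hk2 : k ≤ n) :
    x ≤ kthSmallest (fun i => r (p.succAbove i)) k ↔ x ≤ kthSmallest r k := by
  rw [le_kthSmallest_iff_card_lt _ hk1 hk2,
    le_kthSmallest_iff_card_lt r hk1 (Nat.le_succ_of_le hk2), card_filter_succAbove_lt_of_le hx]

/-- Deterministic order-statistics identity: for real numbers `r 0, …, r (n-1), r n`
(i.e. `r : Fin (n+1) → ℝ`, with `r i.castSucc` the first `n` values and `r (Fin.last n)`
the last one) and `k ∈ {1, …, n}`, the last value is at most the `k`-th smallest of the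
first `n` values if and only if it is at most the `k`-th smallest of the full collection
of `n+1` values. -/
theorem kthSmallest_insert_iff (n : ℕ) (r : Fin (n + 1) → ℝ)
    (k : ℕ) (hk1 : 1 ≤ k) (hk2 : k ≤ n) :
    r (Fin.last n) ≤ kthSmallest (fun i : Fin n => r i.castSucc) k ↔
      r (Fin.last n) ≤ kthSmallest r k := by
  simpa only [Fin.succAbove_last] using
    kthSmallest_insert_iff_general r (Fin.last n) le_rfl hk1 hk2
end
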